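/- Let p and q be restriction-free FNM processes. If p ~sp q, then µ.p ~sp µ.q for every action µ ∈ Act. (Structure-preserving bisimilarity is a congruence for action prefixing.) -/

import Mathlib

/-- Actions of FNM: the invisible action τ, input actions `a ∈ L` and
output actions `ā ∈ L̄` (here `α` plays the role of the finite set `L`). -/
inductive Act (α : Type) where
  | tau : Act α
  | inp : α → Act α
  | out : α → Act α
  deriving DecidableEq

/-- (Open) FNM terms: `0`, the variable `x`, action prefixing `mu.t`, strong
prefixing `a̲.s`, choice `s+s`, constants `C`, parallel `t|t` and
restriction `(νa)p`.  The syntactic categories are carved out below. -/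
inductive FNM (α κ : Type) where
  | nil : FNM α κ
  | var : FNM α κ
  | pref : Act α → FNM α κ → FNM α κ
  | spref : α → FNM α κ → FNM α κ
  | sum : FNM α κ → FNM α κ → FNM α κ
  | const : κ → FNM α κ
  | par : FNM α κ → FNM α κ → FNM α κ
  | res : α → FNM α κ → FNM α κ
  deriving DecidableEq

namespace FNM

variable {α κ : Type}

mutual
  /-- Guarded terms: syntactic category `s ::= 0 | mu.t | a̲.s | s+s`
  (with `t` restriction-free). -/
  def Grd : FNM α κ → Prop
    | .nil => True
    | .var => False
    | .pref _ t => RF t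
    | .spref _ s => Grd s
    | .sum s1 s2 => Grd s1 ∧ Grd s2
    | .const _ => False
    | .par _ _ => False
    | .res _ _ => False
  /-- Restriction-free terms: syntactic category `t ::= q | t|t`, where
  `q ::= s | C | x` is the category of sequential terms. -/
  def RF : FNM α κ → Prop
    | .nil => True
    | .var => True
    | .pref _ t => RF t
    | .spref _ s => Grd s
    | .sum s1 s2 => Grd s1 ∧ Grd s2
    | .const _ => True
    | .par t1 t2 => RF t1 ∧ RF t2
    | .res _ _ => False
end

/-- Sequential terms: `q ::= s | C | x`. -/
def Seq (t : FNM α κ) : Prop :=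
  Grd t ∨ (∃ c, t = FNM.const c) ∨ t = FNM.var

/-- General terms: `p ::= t | (νa)p`. -/
def Gen : FNM α κ → Prop
  | .res _ p => Gen p
  | t => RF t

/-- Closed terms: no occurrence of the variable. -/
def VarFree : FNM α κ → Prop
  | .nil => True
  | .var => False
  | .pref _ t => VarFree t
  | .spref _ s => VarFree s
  | .sum s1 s2 => VarFree s1 ∧ VarFree s2
  | .const _ => True
  | .par t1 t2 => VarFree t1 ∧ VarFree t2
  | .res _ p => VarFree p

/-- Substitution `p{r/x}` of the term `r` for every occurrence of the
variable `x` in `p` (constants are dealt with via the environment). -/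
def subst (r : FNM α κ) : FNM α κ → FNM α κ
  | .nil => .nil
  | .var => r
  | .pref mu t => .pref mu (subst r t)
  | .spref a s => .spref a (subst r s)
  | .sum s1 s2 => .sum (subst r s1) (subst r s2)
  | .const c => .const c
  | .par t1 t2 => .par (subst r t1) (subst r t2)
  | .res a p => .res a (subst r p)

/-- `mu` uses the name `a`. -/
def _root_.Act.uses (a : α) : Act α → Prop
  | .tau => False
  | .inp b => b = a
  | .out b => b = a

/-- `a` occurs free in a term (through an environment `env` giving the body
of each process constant). -/
inductive FreeIn (env : κ → FNM α κ) (a : α) : FNM α κ → Prop where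
  | pref_act {mu : Act α} {t : FNM α κ} : mu.uses a → FreeIn env a (.pref mu t)
  | pref_cont {mu : Act α} {t : FNM α κ} : FreeIn env a t → FreeIn env a (.pref mu t)
  | spref_act {s : FNM α κ} : FreeIn env a (.spref a s)
  | spref_cont {b : α} {s : FNM α κ} : FreeIn env a s → FreeIn env a (.spref b s)
  | sum_l {s1 s2 : FNM α κ} : FreeIn env a s1 → FreeIn env a (.sum s1 s2)
  | sum_r {s1 s2 : FNM α κ} : FreeIn env a s2 → FreeIn env a (.sum s1 s2)
  | par_l {t1 t2 : FNM α κ} : FreeIn env a t1 → FreeIn env a (.par t1 t2)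
  | par_r {t1 t2 : FNM α κ} : FreeIn env a t2 → FreeIn env a (.par t1 t2)
  | res {b : α} {p : FNM α κ} : a ≠ b → FreeIn env a p → FreeIn env a (.res b p)
  | const {c : κ} : FreeIn env a (env c) → FreeIn env a (.const c)

/-- `a` occurs bound (by a restriction) in a term. -/
inductive BoundIn (env : κ → FNM α κ) (a : α) : FNM α κ → Prop where
  | res_here {p : FNM α κ} : BoundIn env a (.res a p)
  | res_in {b : α} {p : FNM α κ} : BoundIn env a p → BoundIn env a (.res b p)
  | pref {mu : Act α} {t : FNM α κ} : BoundIn env a t → BoundIn env a (.pref mu t)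
  | spref {b : α} {s : FNM α κ} : BoundIn env a s → BoundIn env a (.spref b s)
  | sum_l {s1 s2 : FNM α κ} : BoundIn env a s1 → BoundIn env a (.sum s1 s2)
  | sum_r {s1 s2 : FNM α κ} : BoundIn env a s2 → BoundIn env a (.sum s1 s2)
  | par_l {t1 t2 : FNM α κ} : BoundIn env a t1 → BoundIn env a (.par t1 t2)
  | par_r {t1 t2 : FNM α κ} : BoundIn env a t2 → BoundIn env a (.par t1 t2)
  | const {c : κ} : BoundIn env a (env c) → BoundIn env a (.const c)

end FNM

/-- A place of the net `N_FNM`: a sequential (extended) term, rendered as a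
pure sequential term together with the record `ρ : α → Bool` of which names
have been replaced by their restricted counterparts (`ρ a = true` represents
the substitution `{a'/a}`). -/
abbrev Place (α κ : Type) := FNM α κ × (α → Bool)

namespace FNM

variable {α κ : Type} [DecidableEq α] [DecidableEq κ] [Fintype α]

/-- The decomposition function `dec`, mapping (extended) terms to markings:
`dec(0) = θ`, `dec(p|q) = dec(p) ⊕ dec(q)`, `dec((νa)p) = dec(p){a'/a}`, and
a sequential term other than `0` is mapped to a single place. -/
def dec (ρ : α → Bool) : FNM α κ → Multiset (Place α κ)
  | .nil => 0
  | .par t1 t2 => dec ρ t1 + dec ρ t2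
  | .res a p => dec (Function.update ρ a true) p
  | t => {(t, ρ)}

end FNM

/-- Extended visible actions: inputs and outputs, possibly restricted
(`inp a true` represents `a'`, `out a false` represents `ā`, etc.). -/
inductive XAct (α : Type) where
  | inp : α → Bool → XAct α
  | out : α → Bool → XAct α

/-- Labels of net transitions: `τ` is the empty sequence, and otherwise a
sequence of extended actions. -/
abbrev Lbl (α : Type) := List (XAct α)

/-- An extended action carries no restricted name. -/
def XAct.unres {α : Type} : XAct α → Prop
  | .inp _ r => r = false
  | .out _ r => r = false

/-- The label contributed by prefix `mu` under the restriction record `ρ`. -/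
def actL {α : Type} (ρ : α → Bool) : Act α → Lbl α
  | .tau => []
  | .inp a => [XAct.inp a (ρ a)]
  | .out a => [XAct.out a (ρ a)]

/-- The synchronization relation `Sync(σ1, σ2, σ)`: `Sync(α, ᾱ, τ)`,
`Sync(aσ, ā, σ)` and `Sync(ā, aσ, σ)` for `σ ≠ ε` (also on restricted
actions). -/
inductive Sync {α : Type} : Lbl α → Lbl α → Lbl α → Prop where
  | inout (a : α) (r : Bool) : Sync [XAct.inp a r] [XAct.out a r] []
  | outin (a : α) (r : Bool) : Sync [XAct.out a r] [XAct.inp a r] []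
  | seqL (a : α) (r : Bool) (σ : Lbl α) :
      σ ≠ [] → Sync (XAct.inp a r :: σ) [XAct.out a r] σ
  | seqR (a : α) (r : Bool) (σ : Lbl α) :
      σ ≠ [] → Sync [XAct.out a r] (XAct.inp a r :: σ) σ

namespace FNM

variable {α κ : Type} [DecidableEq α] [DecidableEq κ] [Fintype α]

/-- A marking is admissible if for no name `a` both `a` and its restricted
counterpart `a'` occur free in it. -/
def Adm (env : κ → FNM α κ) (m : Multiset (Place α κ)) : Prop :=
  ∀ a : α, ¬ ((∃ p ∈ m, FreeIn env a p.1 ∧ p.2 a = false) ∧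
              (∃ p ∈ m, FreeIn env a p.1 ∧ p.2 a = true))

/-- The net transitions of `N_FNM`, generated by the rules (pref), (sum₁),
(sum₂), (cons), (s-pref) and (s-com). -/
inductive Tr (env : κ → FNM α κ) :
    Multiset (Place α κ) → Lbl α → Multiset (Place α κ) → Prop where
  | pref (ρ : α → Bool) (mu : Act α) (t : FNM α κ) :
      Tr env {(FNM.pref mu t, ρ)} (actL ρ mu) (dec ρ t)
  | sum1 (ρ : α → Bool) (s1 s2 : FNM α κ) (σ : Lbl α) (m : Multiset (Place α κ)) :
      Tr env (dec ρ s1) σ m → Tr env {(FNM.sum s1 s2, ρ)} σ m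
  | sum2 (ρ : α → Bool) (s1 s2 : FNM α κ) (σ : Lbl α) (m : Multiset (Place α κ)) :
      Tr env (dec ρ s2) σ m → Tr env {(FNM.sum s1 s2, ρ)} σ m
  | cons (ρ : α → Bool) (c : κ) (σ : Lbl α) (m : Multiset (Place α κ)) :
      Tr env (dec ρ (env c)) σ m → Tr env {(FNM.const c, ρ)} σ m
  | spref (ρ : α → Bool) (a : α) (s : FNM α κ) (σ : Lbl α) (m : Multiset (Place α κ)) :
      Tr env (dec ρ s) σ m →
      Tr env {(FNM.spref a s, ρ)} (XAct.inp a (ρ a) :: σ) m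
  | scom (m1 m2 m1' m2' : Multiset (Place α κ)) (σ1 σ2 σ : Lbl α) :
      Tr env m1 σ1 m1' → Tr env m2 σ2 m2' →
      Adm env (m1 + m2) → Sync σ1 σ2 σ →
      Tr env (m1 + m2) σ (m1' + m2')

/-- Tritions of the net `N_FNM`: only those whose label contains no
restricted action are kept. -/
def NetTr (env : κ → FNM α κ) (m : Multiset (Place α κ)) (σ : Lbl α)
    (m' : Multiset (Place α κ)) : Prop :=
  Tr env m σ m' ∧ ∀ x ∈ σ, x.unres

/-- First projection of a linking. -/
def pi1 (l : Multiset (Place α κ × Place α κ)) : Multiset (Place α κ) :=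
  l.map Prod.fst

/-- Second projection of a linking. -/
def pi2 (l : Multiset (Place α κ × Place α κ)) : Multiset (Place α κ) :=
  l.map Prod.snd

/-- Structure-preserving bisimulation on the net `N_FNM`. -/
def IsSPB (env : κ → FNM α κ) (R : Set (Multiset (Place α κ × Place α κ))) : Prop :=
  ∀ l ∈ R, ∀ c ≤ l,
    (∀ σ m1, NetTr env (pi1 c) σ m1 →
      ∃ m2 cb, NetTr env (pi2 c) σ m2 ∧
        pi1 cb = m1 ∧ pi2 cb = m2 ∧ l - c + cb ∈ R) ∧
    (∀ σ m2, NetTr env (pi2 c) σ m2 →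
      ∃ m1 cb, NetTr env (pi1 c) σ m1 ∧
        pi1 cb = m1 ∧ pi2 cb = m2 ∧ l - c + cb ∈ R)

/-- `p ~sp q`: some structure-preserving bisimulation contains a linking
projecting on `dec(p)` and `dec(q)`. -/
def SPEq (env : κ → FNM α κ) (p q : FNM α κ) : Prop :=
  ∃ R, IsSPB env R ∧ ∃ l ∈ R,
    pi1 l = dec (fun _ => false) p ∧ pi2 l = dec (fun _ => false) q

end FNM

namespace FNM

theorem tr_ne_zero {α κ : Type} [DecidableEq α] [DecidableEq κ] [Fintype α]
    {env : κ → FNM α κ} {m : Multiset (Place α κ)} {σ : Lbl α} {m' : Multiset (Place α κ)}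
    (h : Tr env m σ m') : m ≠ 0 := by
  induction h with
  | scom m1 m2 m1' m2' σ1 σ2 σ h1 h2 ha hs ih1 ih2 =>
    intro h0
    exact ih1 (add_eq_zero.mp h0).1
  | _ => exact Multiset.singleton_ne_zero _

theorem tr_pref_inv {α κ : Type} [DecidableEq α] [DecidableEq κ] [Fintype α]
    {env : κ → FNM α κ} {m : Multiset (Place α κ)} {σ : Lbl α} {m' : Multiset (Place α κ)}
    (h : Tr env m σ m') {mu : Act α} {p : FNM α κ} {ρ : α → Bool}
    (hm : m = {(FNM.pref mu p, ρ)}) : σ = actL ρ mu ∧ m' = dec ρ p := by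
  cases h with
  | pref ρ' mu' t =>
    have h2 := Multiset.singleton_inj.mp hm
    simp only [Prod.mk.injEq, FNM.pref.injEq] at h2
    obtain ⟨⟨rfl, rfl⟩, rfl⟩ := h2
    exact ⟨rfl, rfl⟩
  | scom m1 m2 m1' m2' σ1 σ2 σ h1 h2 ha hs =>
    exfalso
    have hc := congrArg Multiset.card hm
    have c1 := Multiset.card_pos.mpr (tr_ne_zero h1)
    have c2 := Multiset.card_pos.mpr (tr_ne_zero h2)
    simp only [Multiset.card_add, Multiset.card_singleton] at hc
    omega
  | sum1 => simp at hm
  | sum2 => simp at hm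
  | cons => simp at hm
  | spref => simp at hm

end FNM

open FNM in
/-- structure-preserving bisimilarity is a congruence for action
prefixing: for restriction-free FNM processes `p, q` with `p ~sp q`,
`mu.p ~sp mu.q` for every action `mu ∈ Act`. -/
theorem speq_congr_pref {α κ : Type} [DecidableEq α] [DecidableEq κ]
    [Fintype α] [Finite κ]
    (env : κ → FNM α κ) (henv : ∀ c, Grd (env c) ∧ VarFree (env c))
    (p q : FNM α κ) (hp : RF p) (hq : RF q)
    (hpv : VarFree p) (hqv : VarFree q)
    (h : SPEq env p q) :
    ∀ mu : Act α, SPEq env (FNM.pref mu p) (FNM.pref mu q) := by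
  intro mu
  obtain ⟨R, hR, l, hl, hl1, hl2⟩ := h
  refine ⟨R ∪ {{((FNM.pref mu p, fun _ => false), (FNM.pref mu q, fun _ => false))}}, ?_,
    {((FNM.pref mu p, fun _ => false), (FNM.pref mu q, fun _ => false))}, Or.inr rfl,
    by simp [pi1, dec], by simp [pi2, dec]⟩
  intro l' hl' c hc
  rcases hl' with hl' | hl'
  · obtain ⟨A, B⟩ := hR l' hl' c hc
    refine ⟨fun σ m1 ht => ?_, fun σ m2 ht => ?_⟩
    · obtain ⟨m2, cb, h1, h2, h3, h4⟩ := A σ m1 ht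
      exact ⟨m2, cb, h1, h2, h3, Or.inl h4⟩
    · obtain ⟨m1, cb, h1, h2, h3, h4⟩ := B σ m2 ht
      exact ⟨m1, cb, h1, h2, h3, Or.inl h4⟩
  · rw [Set.mem_singleton_iff] at hl'
    subst hl'
    rcases Multiset.le_singleton.mp hc with rfl | rfl
    · exact ⟨fun σ m ht => absurd (by simp [pi1]) (tr_ne_zero ht.1),
        fun σ m ht => absurd (by simp [pi2]) (tr_ne_zero ht.1)⟩
    · refine ⟨fun σ m ht => ?_, fun σ m ht => ?_⟩
      · obtain ⟨ht, hu⟩ := ht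
        obtain ⟨rfl, rfl⟩ := tr_pref_inv ht (by simp only [pi1, Multiset.map_singleton]; rfl)
        refine ⟨_, l, ⟨?_, hu⟩, hl1, hl2, ?_⟩
        · simp only [pi2, Multiset.map_singleton]
          exact Tr.pref _ _ _
        · rw [tsub_self, zero_add]
          exact Or.inl hl
      · obtain ⟨ht, hu⟩ := ht
        obtain ⟨rfl, rfl⟩ := tr_pref_inv ht (by simp only [pi2, Multiset.map_singleton]; rfl)
        refine ⟨_, l, ⟨?_, hu⟩, hl1, hl2, ?_⟩
        · simp only [pi1, Multiset.map_singleton]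
          exact Tr.pref _ _ _
        · rw [tsub_self, zero_add]
          exact Or.inl hl
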